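/- Define on 𝒰 the functions Ē(f, b, g, q) = 1/(fb) + f^{3/2}/√b + 1/(fb + gq) + g^{3/2}/√q and Q̄(f, b, g, q) = −(3/2)·ln(fb·(fb + gq)) + (1/2)·f^{5/2}·√b − fb/(2(fb + gq)) + (g^{3/2}/√q)·(fb + gq/2). Then (Ē, Q̄) is an entropy/entropy-flux pair for the reduced two-phase thin-film system, i.e. ∇Ē(U)ᵀ·DF(U) = ∇Q̄(U)ᵀ for every U ∈ 𝒰, where ∇ denotes the gradient with respect to (f, b, g, q). -/

import Mathlib

open Matrix

/-- Flux Jacobian of the reduced two-phase thin-film system. -/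
noncomputable def fluxJacobian (f b g q : ℝ) : Matrix (Fin 4) (Fin 4) ℝ :=
  !![f*b,   f^2/2, 0,       0;
     b^2/2, f*b,   0,       0;
     g*b,   f*g,   f*b+g*q, g^2/2;
     b*q,   f*q,   q^2/2,   f*b+g*q]

/-- The entropy `Ē = 1/(fb) + f^{3/2}/√b + 1/(fb+gq) + g^{3/2}/√q`. -/
noncomputable def entropyBarE (U : Fin 4 → ℝ) : ℝ :=
  1 / (U 0 * U 1) + (U 0) ^ ((3:ℝ)/2) / Real.sqrt (U 1)
    + 1 / (U 0 * U 1 + U 2 * U 3) + (U 2) ^ ((3:ℝ)/2) / Real.sqrt (U 3)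

/-- The entropy flux `Q̄ = −(3/2)ln(fb(fb+gq)) + (1/2)f^{5/2}√b
  − fb/(2(fb+gq)) + (g^{3/2}/√q)(fb + gq/2)`. -/
noncomputable def entropyBarQ (U : Fin 4 → ℝ) : ℝ :=
  -(3/2) * Real.log ((U 0 * U 1) * (U 0 * U 1 + U 2 * U 3))
    + (1/2) * (U 0) ^ ((5:ℝ)/2) * Real.sqrt (U 1)
    - (U 0 * U 1) / (2 * (U 0 * U 1 + U 2 * U 3))
    + ((U 2) ^ ((3:ℝ)/2) / Real.sqrt (U 3)) * (U 0 * U 1 + U 2 * U 3 / 2)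

/-!
With `s = fb`, `r = f/b`, `p = gq` and `k = g/q`, the differentials satisfy
`ds · DF = (3/2) s ds`, `dr · DF = (s/2) dr`, `dp · DF = 2 p ds + (s + (3/2) p) dp` and
`dk · DF = (s + p/2) dk`. In these coordinates `∇E · DF = ∇Q` nearly decouples, and `(Ē, Q̄)` is a
sum of four elementary pairs: `(1/s, -(3/2) ln s)`, `(√s r, (s/2) √s r)`,
`(1/(s + p), -(3/2) ln (s + p) - s/(2 (s + p)))` and `(√p k, (s + p/2) √p k)`.
-/

namespace ThinFilm

open scoped Topology

section Calculus

theorem hasFDerivAt_div {𝕜 V : Type*} [NontriviallyNormedField 𝕜] [NormedAddCommGroup V]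
    [NormedSpace 𝕜 V] {c d : V → 𝕜} {c' d' : V →L[𝕜] 𝕜} {x : V} (hc : HasFDerivAt c c' x)
    (hd : HasFDerivAt d d' x) (hx : d x ≠ 0) :
    HasFDerivAt (fun y ↦ c y / d y) ((d x ^ 2)⁻¹ • (d x • c' - c x • d')) x := by
  have hinv : HasFDerivAt (fun y ↦ (d y)⁻¹) (-(d x ^ 2)⁻¹ • d') x :=
    (hasDerivAt_inv hx).comp_hasFDerivAt x hd
  simp only [div_eq_mul_inv]
  refine (hc.mul hinv).congr_fderiv ?_
  match_scalars <;> field_simp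

variable {𝕜 ι : Type*} [NontriviallyNormedField 𝕜] [Finite ι]

theorem fderiv_apply_mul_apply (i j : ι) (x v : ι → 𝕜) :
    fderiv 𝕜 (fun y : ι → 𝕜 ↦ y i * y j) x v = x i * v j + x j * v i := by
  cases nonempty_fintype ι
  rw [((hasFDerivAt_apply i x).fun_mul (hasFDerivAt_apply j x)).fderiv]
  simp

theorem fderiv_apply_div_apply (i : ι) {j : ι} {x : ι → 𝕜} (hx : x j ≠ 0) (v : ι → 𝕜) :
    fderiv 𝕜 (fun y : ι → 𝕜 ↦ y i / y j) x v = (x j * v i - x i * v j) / x j ^ 2 := by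
  cases nonempty_fintype ι
  rw [(hasFDerivAt_div (hasFDerivAt_apply i x) (hasFDerivAt_apply j x) hx).fderiv]
  simp [div_eq_inv_mul]

end Calculus

theorem rpow_three_halves_div_sqrt {x y : ℝ} (hx : 0 ≤ x) (hy : 0 < y) :
    x ^ (3 / 2 : ℝ) / √y = √(x * y) * (x / y) := by
  rw [Real.rpow_div_two_eq_sqrt 3 hx, Real.rpow_ofNat, Real.sqrt_mul hx]
  field_simp
  linear_combination √x * √y ^ 2 * Real.sq_sqrt hx - √x ^ 3 * Real.sq_sqrt hy.le

theorem rpow_five_halves_mul_sqrt {x y : ℝ} (hx : 0 ≤ x) (hy : 0 < y) :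
    x ^ (5 / 2 : ℝ) * √y = x * y * (√(x * y) * (x / y)) := by
  have hsplit : x ^ (5 / 2 : ℝ) = x * x ^ (3 / 2 : ℝ) := by
    rw [← Real.rpow_one_add' hx] <;> norm_num
  rw [← rpow_three_halves_div_sqrt hx hy, hsplit, ← mul_div_assoc]
  field_simp
  rw [Real.sq_sqrt hy.le]

/-- The differential of the flux `F` at the state `U`: the linear map with matrix `fluxJacobian`. -/
noncomputable def fluxDeriv (U : Fin 4 → ℝ) : (Fin 4 → ℝ) →L[ℝ] (Fin 4 → ℝ) :=
  (fluxJacobian (U 0) (U 1) (U 2) (U 3)).mulVecLin.toContinuousLinearMap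

/-- `(E, Q)` is an entropy/entropy-flux pair at the state `U`: both functions are differentiable
there and `dQ = dE ∘ DF`. -/
def IsEntropyPairAt (E Q : (Fin 4 → ℝ) → ℝ) (U : Fin 4 → ℝ) : Prop :=
  ∃ E' : (Fin 4 → ℝ) →L[ℝ] ℝ, HasFDerivAt E E' U ∧ HasFDerivAt Q (E' ∘L fluxDeriv U) U

/-- The product `s = fb`, the Riemann invariant of the characteristic speed `(3/2) s`. -/
def firstProd (U : Fin 4 → ℝ) : ℝ := U 0 * U 1

/-- The ratio `r = f/b`, the Riemann invariant of the characteristic speed `s/2`. -/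
noncomputable def firstRatio (U : Fin 4 → ℝ) : ℝ := U 0 / U 1

/-- The product `p = gq`, which completes `s`, `r`, `k` to a coordinate system on states with
positive components. -/
def secondProd (U : Fin 4 → ℝ) : ℝ := U 2 * U 3

/-- The ratio `k = g/q`, the Riemann invariant of the characteristic speed `s + p/2`. -/
noncomputable def secondRatio (U : Fin 4 → ℝ) : ℝ := U 2 / U 3

variable {U : Fin 4 → ℝ} {E Q E₁ Q₁ E₂ Q₂ : (Fin 4 → ℝ) → ℝ}

theorem fluxDeriv_single_one (U : Fin 4 → ℝ) (j : Fin 4) :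
    fluxDeriv U (Pi.single j 1) = (fluxJacobian (U 0) (U 1) (U 2) (U 3))ᵀ j :=
  mulVec_single_one (fluxJacobian (U 0) (U 1) (U 2) (U 3)) j

theorem fluxDeriv_apply (U v : Fin 4 → ℝ) :
    fluxDeriv U v =
      ![U 0 * U 1 * v 0 + U 0 ^ 2 / 2 * v 1,
        U 1 ^ 2 / 2 * v 0 + U 0 * U 1 * v 1,
        U 2 * U 1 * v 0 + U 0 * U 2 * v 1 + (U 0 * U 1 + U 2 * U 3) * v 2 + U 2 ^ 2 / 2 * v 3,
        U 1 * U 3 * v 0 + U 0 * U 3 * v 1 + U 3 ^ 2 / 2 * v 2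
          + (U 0 * U 1 + U 2 * U 3) * v 3] := by
  change fluxJacobian (U 0) (U 1) (U 2) (U 3) *ᵥ v = _
  ext i
  fin_cases i <;> simp [fluxJacobian, mulVec, dotProduct, Fin.sum_univ_four]

theorem IsEntropyPairAt.fderiv_transpose_apply (h : IsEntropyPairAt E Q U) (j : Fin 4) :
    fderiv ℝ E U ((fluxJacobian (U 0) (U 1) (U 2) (U 3))ᵀ j) = fderiv ℝ Q U (Pi.single j 1) := by
  obtain ⟨E', hE, hQ⟩ := h
  rw [hE.fderiv, hQ.fderiv, ContinuousLinearMap.comp_apply, fluxDeriv_single_one]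

theorem IsEntropyPairAt.add (h₁ : IsEntropyPairAt E₁ Q₁ U) (h₂ : IsEntropyPairAt E₂ Q₂ U) :
    IsEntropyPairAt (E₁ + E₂) (Q₁ + Q₂) U := by
  obtain ⟨E₁', hE₁, hQ₁⟩ := h₁
  obtain ⟨E₂', hE₂, hQ₂⟩ := h₂
  refine ⟨E₁' + E₂', hE₁.add hE₂, ?_⟩
  rw [ContinuousLinearMap.add_comp]
  exact hQ₁.add hQ₂

theorem IsEntropyPairAt.congr_of_eventuallyEq (h : IsEntropyPairAt E₁ Q₁ U)
    (hE : E₂ =ᶠ[𝓝 U] E₁) (hQ : Q₂ =ᶠ[𝓝 U] Q₁) : IsEntropyPairAt E₂ Q₂ U := by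
  obtain ⟨E', hE', hQ'⟩ := h
  exact ⟨E', hE'.congr_of_eventuallyEq hE, hQ'.congr_of_eventuallyEq hQ⟩

theorem differentiableAt_firstProd : DifferentiableAt ℝ firstProd U := by
  unfold firstProd
  fun_prop

theorem differentiableAt_secondProd : DifferentiableAt ℝ secondProd U := by
  unfold secondProd
  fun_prop

theorem differentiableAt_firstRatio (hb : U 1 ≠ 0) : DifferentiableAt ℝ firstRatio U := by
  unfold firstRatio
  fun_prop (disch := assumption)

theorem differentiableAt_secondRatio (hq : U 3 ≠ 0) : DifferentiableAt ℝ secondRatio U := by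
  unfold secondRatio
  fun_prop (disch := assumption)

theorem fderiv_firstProd_comp_fluxDeriv (U : Fin 4 → ℝ) :
    fderiv ℝ firstProd U ∘L fluxDeriv U = (3 / 2 * firstProd U) • fderiv ℝ firstProd U := by
  ext1 v
  unfold firstProd
  simp only [ContinuousLinearMap.comp_apply, _root_.smul_apply, smul_eq_mul,
    fderiv_apply_mul_apply, fluxDeriv_apply, cons_val]
  ring

theorem fderiv_firstRatio_comp_fluxDeriv (hb : U 1 ≠ 0) :
    fderiv ℝ firstRatio U ∘L fluxDeriv U = (firstProd U / 2) • fderiv ℝ firstRatio U := by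
  ext1 v
  unfold firstRatio firstProd
  simp only [ContinuousLinearMap.comp_apply, _root_.smul_apply, smul_eq_mul,
    fderiv_apply_div_apply _ hb, fluxDeriv_apply, cons_val]
  ring

theorem fderiv_secondProd_comp_fluxDeriv (U : Fin 4 → ℝ) :
    fderiv ℝ secondProd U ∘L fluxDeriv U =
      (2 * secondProd U) • fderiv ℝ firstProd U
        + (firstProd U + 3 / 2 * secondProd U) • fderiv ℝ secondProd U := by
  ext1 v
  unfold secondProd firstProd
  simp only [ContinuousLinearMap.comp_apply, _root_.add_apply, _root_.smul_apply, smul_eq_mul,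
    fderiv_apply_mul_apply, fluxDeriv_apply, cons_val]
  ring

theorem fderiv_secondRatio_comp_fluxDeriv (hq : U 3 ≠ 0) :
    fderiv ℝ secondRatio U ∘L fluxDeriv U =
      (firstProd U + secondProd U / 2) • fderiv ℝ secondRatio U := by
  ext1 v
  unfold secondRatio firstProd secondProd
  simp only [ContinuousLinearMap.comp_apply, _root_.smul_apply, smul_eq_mul,
    fderiv_apply_div_apply _ hq, fluxDeriv_apply, cons_val]
  ring

theorem isEntropyPairAt_comp_firstProd {φ ϑ : ℝ → ℝ} {φ' : ℝ} (hφ : HasDerivAt φ φ' (firstProd U))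
    (hϑ : HasDerivAt ϑ (3 / 2 * firstProd U * φ') (firstProd U)) :
    IsEntropyPairAt (fun V ↦ φ (firstProd V)) (fun V ↦ ϑ (firstProd V)) U := by
  have hs := (differentiableAt_firstProd (U := U)).hasFDerivAt
  refine ⟨φ' • fderiv ℝ firstProd U, hφ.comp_hasFDerivAt U hs,
    (hϑ.comp_hasFDerivAt U hs).congr_fderiv ?_⟩
  rw [ContinuousLinearMap.smul_comp, fderiv_firstProd_comp_fluxDeriv]
  module

theorem isEntropyPairAt_inv_firstProd (hs : firstProd U ≠ 0) :
    IsEntropyPairAt (fun V ↦ (firstProd V)⁻¹) (fun V ↦ -(3 / 2) * Real.log (firstProd V)) U := by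
  refine isEntropyPairAt_comp_firstProd (hasDerivAt_inv hs)
    (((Real.hasDerivAt_log hs).const_mul (-(3 / 2) : ℝ)).congr_deriv ?_)
  field_simp

theorem isEntropyPairAt_sqrt_firstProd_mul {ψ : ℝ → ℝ} (hs : 0 < firstProd U)
    (hψ : DifferentiableAt ℝ ψ (firstRatio U)) :
    IsEntropyPairAt (fun V ↦ √(firstProd V) * ψ (firstRatio V))
      (fun V ↦ firstProd V / 2 * (√(firstProd V) * ψ (firstRatio V))) U := by
  have hb : U 1 ≠ 0 := right_ne_zero_of_mul hs.ne'
  have hds := (differentiableAt_firstProd (U := U)).hasFDerivAt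
  have hdE := (hds.sqrt hs.ne').mul
    (hψ.hasDerivAt.comp_hasFDerivAt U (differentiableAt_firstRatio hb).hasFDerivAt)
  refine ⟨_, hdE, ((hds.mul_const 2⁻¹).mul hdE).congr_fderiv ?_⟩
  simp only [ContinuousLinearMap.add_comp, ContinuousLinearMap.smul_comp,
    fderiv_firstProd_comp_fluxDeriv, fderiv_firstRatio_comp_fluxDeriv hb, Function.comp_apply,
    Pi.mul_apply]
  match_scalars
  · ring
  · field_simp
    linear_combination 2 * ψ (firstRatio U) * Real.sq_sqrt hs.le

-- Up to affine changes, `1 / (s + p)` is the only function of `s + p` that admits an entropy flux,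
-- so there is no free profile here as there is for functions of `s`.
theorem isEntropyPairAt_inv_firstProd_add_secondProd (hP : firstProd U + secondProd U ≠ 0) :
    IsEntropyPairAt (fun V ↦ (firstProd V + secondProd V)⁻¹)
      (fun V ↦ -(3 / 2) * Real.log (firstProd V + secondProd V)
        - firstProd V / (2 * (firstProd V + secondProd V))) U := by
  have hds := (differentiableAt_firstProd (U := U)).hasFDerivAt
  have hdP := hds.add (differentiableAt_secondProd (U := U)).hasFDerivAt
  refine ⟨_, (hasDerivAt_inv hP).comp_hasFDerivAt U hdP,
    (((hdP.log hP).const_mul (-(3 / 2) : ℝ)).sub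
      (hasFDerivAt_div hds (hdP.const_mul 2) (mul_ne_zero two_ne_zero hP))).congr_fderiv ?_⟩
  simp only [ContinuousLinearMap.add_comp, ContinuousLinearMap.smul_comp,
    fderiv_firstProd_comp_fluxDeriv, fderiv_secondProd_comp_fluxDeriv, Pi.add_apply]
  match_scalars <;> field_simp <;> ring

theorem isEntropyPairAt_sqrt_secondProd_mul {ψ : ℝ → ℝ} (hp : 0 < secondProd U)
    (hψ : DifferentiableAt ℝ ψ (secondRatio U)) :
    IsEntropyPairAt (fun V ↦ √(secondProd V) * ψ (secondRatio V))
      (fun V ↦ (firstProd V + secondProd V / 2) * (√(secondProd V) * ψ (secondRatio V))) U := by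
  have hq : U 3 ≠ 0 := right_ne_zero_of_mul hp.ne'
  have hds := (differentiableAt_firstProd (U := U)).hasFDerivAt
  have hdp := (differentiableAt_secondProd (U := U)).hasFDerivAt
  have hdE := (hdp.sqrt hp.ne').mul
    (hψ.hasDerivAt.comp_hasFDerivAt U (differentiableAt_secondRatio hq).hasFDerivAt)
  refine ⟨_, hdE, ((hds.add (hdp.mul_const 2⁻¹)).mul hdE).congr_fderiv ?_⟩
  simp only [ContinuousLinearMap.add_comp, ContinuousLinearMap.smul_comp,
    fderiv_secondProd_comp_fluxDeriv, fderiv_secondRatio_comp_fluxDeriv hq, Function.comp_apply,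
    Pi.add_apply, Pi.mul_apply]
  match_scalars
  · ring
  · field_simp
    linear_combination 2 * ψ (secondRatio U) * Real.sq_sqrt hp.le
  · field_simp
    linear_combination ψ (secondRatio U) * Real.sq_sqrt hp.le

theorem entropyBarE_eq (hf : 0 < U 0) (hb : 0 < U 1) (hg : 0 < U 2) (hq : 0 < U 3) :
    entropyBarE U = (firstProd U)⁻¹ + √(firstProd U) * firstRatio U
      + (firstProd U + secondProd U)⁻¹ + √(secondProd U) * secondRatio U := by
  unfold entropyBarE firstProd firstRatio secondProd secondRatio
  rw [rpow_three_halves_div_sqrt hf.le hb, rpow_three_halves_div_sqrt hg.le hq]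
  simp only [one_div]

theorem entropyBarQ_eq (hf : 0 < U 0) (hb : 0 < U 1) (hg : 0 < U 2) (hq : 0 < U 3) :
    entropyBarQ U = -(3 / 2) * Real.log (firstProd U)
      + firstProd U / 2 * (√(firstProd U) * firstRatio U)
      + (-(3 / 2) * Real.log (firstProd U + secondProd U)
        - firstProd U / (2 * (firstProd U + secondProd U)))
      + (firstProd U + secondProd U / 2) * (√(secondProd U) * secondRatio U) := by
  have hs : 0 < U 0 * U 1 := mul_pos hf hb
  have hP : 0 < U 0 * U 1 + U 2 * U 3 := add_pos hs (mul_pos hg hq)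
  unfold entropyBarQ firstProd firstRatio secondProd secondRatio
  rw [Real.log_mul hs.ne' hP.ne', mul_assoc (1 / 2), rpow_five_halves_mul_sqrt hf.le hb,
    rpow_three_halves_div_sqrt hg.le hq]
  ring

end ThinFilm

open ThinFilm Topology in
theorem entropyBar_pair_general {U : Fin 4 → ℝ} (hf : 0 < U 0) (hb : 0 < U 1) (hg : 0 < U 2)
    (hq : 0 < U 3) : IsEntropyPairAt entropyBarE entropyBarQ U := by
  have hs : 0 < firstProd U := mul_pos hf hb
  have hp : 0 < secondProd U := mul_pos hg hq
  have hpair :=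
    (((isEntropyPairAt_inv_firstProd hs.ne').add
      (isEntropyPairAt_sqrt_firstProd_mul hs differentiableAt_id)).add
      (isEntropyPairAt_inv_firstProd_add_secondProd (add_pos hs hp).ne')).add
      (isEntropyPairAt_sqrt_secondProd_mul hp differentiableAt_id)
  have hpos (i : Fin 4) (hi : 0 < U i) : ∀ᶠ V in 𝓝 U, 0 < V i :=
    (continuous_apply i).continuousAt.eventually (lt_mem_nhds hi)
  refine hpair.congr_of_eventuallyEq ?_ ?_ <;>
    filter_upwards [hpos 0 hf, hpos 1 hb, hpos 2 hg, hpos 3 hq] with V hf hb hg hq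
  · exact entropyBarE_eq hf hb hg hq
  · exact entropyBarQ_eq hf hb hg hq

/-- `(Ē, Q̄)` is an entropy/entropy-flux pair for the reduced two-phase
thin-film system: `∇Ē(U)ᵀ·DF(U) = ∇Q̄(U)ᵀ` for every `U ∈ 𝒰` (componentwise:
`dĒ(U)` applied to the `j`-th column of `DF(U)` equals `∂Q̄/∂Uⱼ`). -/
theorem entropyBar_pair :
    ∀ U : Fin 4 → ℝ,
      0 < U 0 → 0 < U 1 → 0 < U 2 → 0 < U 3 → U 0 * U 1 < U 2 * U 3 →
      ∀ j : Fin 4,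
        fderiv ℝ entropyBarE U ((fluxJacobian (U 0) (U 1) (U 2) (U 3))ᵀ j)
          = fderiv ℝ entropyBarQ U (Pi.single j 1) := by
  intro U hf hb hg hq _ j
  exact (entropyBar_pair_general hf hb hg hq).fderiv_transpose_apply j
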